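/- Let Γ be a play-once DG game satisfying the normalization: every non-terminal position v has N⁺(v) ⊄ T and |N⁺(v) ∩ T| ≤ 1. Define S = { v ∈ V∖T : N⁺(v) ∩ T ≠ ∅ and a(v) ≻_{i(v)} ∞ } (a(v) being the unique terminal in N⁺(v) ∩ T) and W = the set of positions reachable from v₀ by a directed path in the induced subgraph G[V∖S]. If the induced subgraph G[W] is acyclic, then Γ has a terminal Nash equilibrium, i.e., a Nash equilibrium σ with g(σ) ∈ T. -/

import Mathlib

/-!
The idea is to enlarge the acyclic part of the graph as far as possible and to combine backward
induction on it with threats that lead back to the equilibrium path.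

Call a subrelation `r` of the move relation *admissible* if it contains all moves from positions
outside `S` and all moves to terminals, and if no position `r`-reachable from the initial position
lies on an `r`-cycle. Acyclicity of `G[W]` makes the smallest candidate `baseRel` admissible
(`admissible_baseRel`). Take a maximal admissible `r`, and let `C` be the set of positions
`r`-reachable from the initial position. Maximality means that every discarded move `s → z`
(necessarily with `s ∈ S`) has the property that `z` `r`-reaches `s` or `z` `r`-reaches an `r`-cycle
(`Admissible.discarded_move`).

On `C` the relation `r` is well-founded, so backward induction (`exists_backward_induction`) yields
values `val` and optimal moves `τ`. Let `P` be the `τ`-play from the initial position, ending in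
the terminal `c = val init`. The equilibrium `σ` plays `τ` on `P`; off `P`, a position that can
`r`-reach `P` moves towards `P`; a position that cannot, but `r`-reaches an `r`-cycle, moves so as
to keep that property; the remaining positions of `C` play `τ`.

Let the owner of `p ∈ P` deviate to `y`. If `r p y`, then all relevant moves remain in the acyclic
relation `r` on `C`, so the play ends, in `c` or in `val y`, which is no better for `p` than
`val p = c`. If the move is discarded, the play forever stays among positions that `r`-reach
`P` or an `r`-cycle; the only terminal of that kind is `c`, so the outcome is `c` or `∞`, and
`∞` is worse for `p ∈ S` than `a(p)`, hence worse than `c`.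
-/

open Classical

/-- A deterministic graphical (DG) game on vertex (position) set `V` with player set `ι`.
`adj` is the move relation of the digraph; terminals are exactly the vertices of
out-degree `0`.  `owner x` is the player controlling position `x` (irrelevant for
terminals), `init` is the initial position, and `pref i x y` means that player `i`
strictly prefers outcome `x` to outcome `y`, where outcomes are encoded as
`Option V`: `some t` for a terminal `t` and `none` for the infinite outcome `∞`. -/
structure DGGame (V : Type*) (ι : Type*) where
  adj : V → V → Prop
  owner : V → ι
  init : V
  pref : ι → Option V → Option V → Prop

namespace DGGame

variable {V ι : Type*} (Γ : DGGame V ι)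

/-- A terminal position: no outgoing moves. -/
def Terminal (x : V) : Prop := ∀ y, ¬ Γ.adj x y

/-- The set of outcomes `A = T ∪ {∞}`. -/
def OutcomeSet : Set (Option V) := {x | x = none ∨ ∃ t, Γ.Terminal t ∧ x = some t}

/-- The preferences of each player form a strict linear order on the outcome set. -/
def PrefOrder : Prop :=
  ∀ i : ι,
    (∀ x ∈ Γ.OutcomeSet, ¬ Γ.pref i x x) ∧
    (∀ x ∈ Γ.OutcomeSet, ∀ y ∈ Γ.OutcomeSet, ∀ z ∈ Γ.OutcomeSet,
        Γ.pref i x y → Γ.pref i y z → Γ.pref i x z) ∧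
    (∀ x ∈ Γ.OutcomeSet, ∀ y ∈ Γ.OutcomeSet, x ≠ y → Γ.pref i x y ∨ Γ.pref i y x)

/-- One step of the play determined by a situation `σ` (stays put at terminals). -/
noncomputable def step (σ : V → V) (x : V) : V :=
  if Γ.Terminal x then x else σ x

/-- The position reached after `n` moves of the play starting at the initial position. -/
noncomputable def iter (σ : V → V) (n : ℕ) : V := (Γ.step σ)^[n] Γ.init

/-- The outcome `g(σ)` of a situation: the terminal at which the play from the initial
position ends, or `none` (i.e. `∞`) if the play is infinite. -/
noncomputable def outcome (σ : V → V) : Option V :=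
  if h : ∃ n, Γ.Terminal (Γ.iter σ n) then some (Γ.iter σ (Nat.find h)) else none

/-- A situation: a choice, for every non-terminal position, of a move from it.
(Values at terminal positions are irrelevant.) -/
def IsSituation (σ : V → V) : Prop := ∀ x, ¬ Γ.Terminal x → Γ.adj x (σ x)

/-- Nash equilibrium in pure stationary strategies: no player `i` can obtain a strictly
better outcome by changing his own moves only. -/
def IsNE (σ : V → V) : Prop :=
  Γ.IsSituation σ ∧
  ∀ (i : ι) (σ' : V → V), Γ.IsSituation σ' →
    (∀ x, Γ.owner x ≠ i → σ' x = σ x) →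
    ¬ Γ.pref i (Γ.outcome σ') (Γ.outcome σ)

/-- A terminal Nash equilibrium: a NE whose outcome is a terminal. -/
def IsTerminalNE (σ : V → V) : Prop := Γ.IsNE σ ∧ ∃ t, Γ.outcome σ = some t

/-- A non-terminal Nash equilibrium: a NE whose outcome is `∞`. -/
def IsNonterminalNE (σ : V → V) : Prop := Γ.IsNE σ ∧ Γ.outcome σ = none

/-- A terminal DG game: every player prefers every terminal outcome to `∞`. -/
def TerminalGame : Prop := ∀ (i : ι) (t : V), Γ.Terminal t → Γ.pref i (some t) none

/-- A play-once DG game: every player controls exactly one position. -/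
def PlayOnce : Prop := ∀ i : ι, {x | ¬ Γ.Terminal x ∧ Γ.owner x = i}.ncard = 1

/-- Reachability by a directed path. -/
def Reaches (x y : V) : Prop := Relation.ReflTransGen Γ.adj x y

end DGGame

namespace DGGame

variable {V ι : Type*}

/-- The set `S`: non-terminal positions `v` having a move to a terminal `a(v)` that the
controlling player prefers to `∞`. -/
def Sset (Γ : DGGame V ι) : Set V :=
  {x | ¬ Γ.Terminal x ∧
    ∃ t, Γ.adj x t ∧ Γ.Terminal t ∧ Γ.pref (Γ.owner x) (some t) none}

/-- The move relation of the induced subgraph `G[V∖S]`. -/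
def adjNS (Γ : DGGame V ι) (x y : V) : Prop :=
  Γ.adj x y ∧ x ∉ Γ.Sset ∧ y ∉ Γ.Sset

/-- The set `W`: positions reachable from the initial position by a directed path in
the induced subgraph `G[V∖S]`. -/
def Wset (Γ : DGGame V ι) : Set V :=
  {x | Γ.init ∉ Γ.Sset ∧ x ∉ Γ.Sset ∧ Relation.ReflTransGen Γ.adjNS Γ.init x}

/-- The move relation of the induced subgraph `G[W]`. -/
def adjW (Γ : DGGame V ι) (x y : V) : Prop :=
  Γ.adj x y ∧ x ∈ Γ.Wset ∧ y ∈ Γ.Wset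

/-- The normalization used for play-once games: every non-terminal position has a
non-terminal out-neighbour (`N⁺(v) ⊄ T`) and at most one terminal out-neighbour. -/
def Normalized (Γ : DGGame V ι) : Prop :=
  ∀ x, ¬ Γ.Terminal x →
    (∃ y, Γ.adj x y ∧ ¬ Γ.Terminal y) ∧ {y | Γ.adj x y ∧ Γ.Terminal y}.ncard ≤ 1

end DGGame

namespace DGGame

variable {V ι : Type*}

/-! ### Outcomes of plays confined to a set -/

lemma iter_succ (Γ : DGGame V ι) (σ : V → V) (n : ℕ) :
    Γ.iter σ (n + 1) = Γ.step σ (Γ.iter σ n) := by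
  simp only [iter, Function.iterate_succ_apply']

lemma iter_mem (Γ : DGGame V ι) (σ : V → V) (I : Set V) (h0 : Γ.init ∈ I)
    (hI : ∀ v ∈ I, ¬ Γ.Terminal v → σ v ∈ I) (n : ℕ) : Γ.iter σ n ∈ I := by
  induction n with
  | zero => simpa [iter] using h0
  | succ n ih =>
    rw [iter_succ, step]
    split_ifs with h
    · exact ih
    · exact hI _ ih h

lemma outcome_cases (Γ : DGGame V ι) (σ : V → V) (I : Set V) (h0 : Γ.init ∈ I)
    (hI : ∀ v ∈ I, ¬ Γ.Terminal v → σ v ∈ I) :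
    Γ.outcome σ = none ∨ ∃ t ∈ I, Γ.Terminal t ∧ Γ.outcome σ = some t := by
  unfold outcome
  split_ifs with h
  · exact Or.inr ⟨_, iter_mem Γ σ I h0 hI _, Nat.find_spec h, rfl⟩
  · exact Or.inl rfl

/-- A play all of whose moves descend in a well-founded relation terminates. -/
lemma exists_outcome (Γ : DGGame V ι) (σ : V → V) (I : Set V) (h0 : Γ.init ∈ I)
    (hI : ∀ v ∈ I, ¬ Γ.Terminal v → σ v ∈ I) (q : V → V → Prop) (hq : WellFounded q)
    (hσ : ∀ v ∈ I, ¬ Γ.Terminal v → q (σ v) v) :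
    ∃ t ∈ I, Γ.Terminal t ∧ Γ.outcome σ = some t := by
  rcases outcome_cases Γ σ I h0 hI with h | h
  · exfalso
    have hn : ∀ n, ¬ Γ.Terminal (Γ.iter σ n) := by
      intro n hn
      have : ∃ n, Γ.Terminal (Γ.iter σ n) := ⟨n, hn⟩
      simp [outcome, this] at h
    have key : ∀ v, ∀ n, Γ.iter σ n ≠ v := by
      intro v
      induction v using hq.induction with
      | _ v ih =>
        rintro n rfl
        have hs : Γ.iter σ (n + 1) = σ (Γ.iter σ n) := by
          rw [iter_succ, step, if_neg (hn n)]
        exact ih _ (hσ _ (iter_mem Γ σ I h0 hI n) (hn n)) (n + 1) hs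
    exact key _ 0 rfl
  · exact h

/-! ### Admissible relations -/

/-- The moves retained from the start: those from positions outside `S` and those to terminals. -/
def baseRel (Γ : DGGame V ι) (a b : V) : Prop :=
  Γ.adj a b ∧ (a ∉ Γ.Sset ∨ Γ.Terminal b)

/-- A set of moves containing `baseRel` without cycles reachable from the initial position. -/
structure Admissible (Γ : DGGame V ι) (r : V → V → Prop) : Prop where
  le_adj : r ≤ Γ.adj
  base_le : Γ.baseRel ≤ r
  acyclic : ∀ x, Relation.ReflTransGen r Γ.init x → ¬ Relation.TransGen r x x

lemma baseRel_mem_Wset (Γ : DGGame V ι) {x : V}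
    (h : Relation.ReflTransGen Γ.baseRel Γ.init x) :
    ¬ Γ.Terminal x → x ∉ Γ.Sset → x ∈ Γ.Wset := by
  induction h with
  | refl => exact fun _ hS => ⟨hS, hS, .refl⟩
  | @tail b c _ hbc ih =>
    intro hT hS
    have hb : b ∉ Γ.Sset := hbc.2.resolve_right hT
    obtain ⟨h0, _, h2⟩ := ih (fun h => h _ hbc.1) hb
    exact ⟨h0, hS, h2.tail ⟨hbc.1, hb, hS⟩⟩

lemma baseRel_transGen_adjW (Γ : DGGame V ι) {a b : V}
    (ha : Relation.ReflTransGen Γ.baseRel Γ.init a) (haS : a ∉ Γ.Sset)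
    (h : Relation.TransGen Γ.baseRel a b) :
    ¬ Γ.Terminal b → b ∉ Γ.Sset → Relation.TransGen Γ.adjW a b := by
  induction h with
  | @single b hab =>
    intro hT hS
    exact .single ⟨hab.1, baseRel_mem_Wset Γ ha (fun h => h _ hab.1) haS,
      baseRel_mem_Wset Γ (ha.tail hab) hT hS⟩
  | @tail b c hab hbc ih =>
    intro hT hS
    have hb : b ∉ Γ.Sset := hbc.2.resolve_right hT
    have hbT : ¬ Γ.Terminal b := fun h => h _ hbc.1
    have hb0 := ha.trans hab.to_reflTransGen
    exact (ih hbT hb).tail ⟨hbc.1, baseRel_mem_Wset Γ hb0 hbT hb,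
      baseRel_mem_Wset Γ (hb0.tail hbc) hT hS⟩

lemma admissible_baseRel (Γ : DGGame V ι)
    (hacyc : ¬ ∃ x, Relation.TransGen Γ.adjW x x) : Γ.Admissible Γ.baseRel where
  le_adj := fun _ _ h => h.1
  base_le := le_rfl
  acyclic := by
    intro x hx hxx
    have hT : ¬ Γ.Terminal x := by
      obtain ⟨y, hxy, _⟩ := Relation.TransGen.head'_iff.1 hxx
      exact fun h => h _ hxy.1
    have hS : x ∉ Γ.Sset := by
      -- The successor of `x` on the cycle is not terminal, so the move is not retained for
      -- leading to a terminal.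
      obtain ⟨y, hxy, hyx⟩ := Relation.TransGen.head'_iff.1 hxx
      refine hxy.2.resolve_right fun hy => ?_
      rcases Relation.ReflTransGen.cases_head hyx with rfl | ⟨z, hyz, _⟩
      · exact hT hy
      · exact hy _ hyz.1
    exact hacyc ⟨x, baseRel_transGen_adjW Γ hx hS hxx hT hS⟩

/-- `v` reaches a cycle of `r`. -/
def ReachesCycle (r : V → V → Prop) (v : V) : Prop :=
  ∃ x, Relation.ReflTransGen r v x ∧ Relation.TransGen r x x

lemma ReachesCycle.exists_succ {r : V → V → Prop} {v : V} (h : ReachesCycle r v) :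
    ∃ y, r v y ∧ ReachesCycle r y := by
  obtain ⟨x, hvx, hxx⟩ := h
  rcases Relation.ReflTransGen.cases_head hvx with rfl | ⟨y, hvy, hyx⟩
  · obtain ⟨y, hvy, hyv⟩ := Relation.TransGen.head'_iff.1 hxx
    exact ⟨y, hvy, v, hyv, hxx⟩
  · exact ⟨y, hvy, x, hyx, hxx⟩

lemma reflTransGen_add_edge {r : V → V → Prop} {s z a b : V}
    (h : Relation.ReflTransGen (fun u v => r u v ∨ (u = s ∧ v = z)) a b) :
    Relation.ReflTransGen r a b ∨
      (Relation.ReflTransGen r a s ∧ Relation.ReflTransGen r z b) := by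
  induction h with
  | refl => exact Or.inl .refl
  | tail _ hbc ih =>
    rcases hbc with hbc | ⟨rfl, rfl⟩
    · exact ih.imp (fun h => h.tail hbc) (fun h => ⟨h.1, h.2.tail hbc⟩)
    · exact ih.elim (fun h => Or.inr ⟨h, .refl⟩) (fun h => Or.inr ⟨h.1, .refl⟩)

/-- Adding a discarded move `s → z` to a maximal admissible relation creates a reachable cycle,
which either uses the new move or lies beyond `z`. -/
lemma Admissible.discarded_move {Γ : DGGame V ι} {r : V → V → Prop}
    (hr : Maximal Γ.Admissible r) {s z : V} (hadj : Γ.adj s z) (hsz : ¬ r s z) :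
    Relation.ReflTransGen r z s ∨ ReachesCycle r z := by
  by_contra! hcon
  obtain ⟨h1, h2⟩ := hcon
  set r' : V → V → Prop := fun u v => r u v ∨ (u = s ∧ v = z)
  have hle : r ≤ r' := fun u v h => Or.inl h
  refine hsz (hr.2 (y := r') ⟨?_, hr.1.base_le.trans hle, ?_⟩ hle s z (Or.inr ⟨rfl, rfl⟩))
  · rintro u v (h | ⟨rfl, rfl⟩)
    · exact hr.1.le_adj _ _ h
    · exact hadj
  · intro x hx hxx
    obtain ⟨y, hxy, hyx⟩ := Relation.TransGen.head'_iff.1 hxx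
    rcases hxy with hxy | ⟨rfl, rfl⟩
    · rcases reflTransGen_add_edge hyx with hyx | ⟨hys, hzx⟩
      · have hc : Relation.TransGen r x x := Relation.TransGen.head' hxy hyx
        rcases reflTransGen_add_edge hx with hx | ⟨_, hzx⟩
        · exact hr.1.acyclic x hx hc
        · exact h2 ⟨x, hzx, hc⟩
      · exact h1 (hzx.trans (hys.head hxy))
    · rcases reflTransGen_add_edge hyx with hyx | ⟨hyx, _⟩
      · exact h1 hyx
      · exact h1 hyx

/-- On the positions reachable from the initial position, the converse of an admissible relation
is well-founded. -/
lemma Admissible.wellFounded [Finite V] {Γ : DGGame V ι} {r : V → V → Prop}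
    (hr : Γ.Admissible r) :
    WellFounded (fun y x => r x y ∧ Relation.ReflTransGen r Γ.init x) := by
  let q : V → V → Prop := fun y x => Relation.TransGen r x y ∧ Relation.ReflTransGen r Γ.init x
  have : IsTrans V q := ⟨fun _ _ _ h1 h2 => ⟨h2.1.trans h1.1, h2.2⟩⟩
  have : Std.Irrefl q := ⟨fun x h => hr.acyclic x h.2 h.1⟩
  exact Subrelation.wf (fun h => ⟨.single h.1, h.2⟩) (Finite.wellFounded_of_trans_of_irrefl q)

/-! ### Backward induction -/

lemma exists_best [Finite V] (Γ : DGGame V ι) (hpref : Γ.PrefOrder) (i : ι) (A : Set V)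
    (hA : A.Nonempty) (hT : ∀ t ∈ A, Γ.Terminal t) :
    ∃ t ∈ A, ∀ u ∈ A, ¬ Γ.pref i (some u) (some t) := by
  let q : V → V → Prop := fun a b =>
    Γ.Terminal a ∧ Γ.Terminal b ∧ Γ.pref i (some a) (some b)
  have hO : ∀ a, Γ.Terminal a → some a ∈ Γ.OutcomeSet := fun a ha => Or.inr ⟨a, ha, rfl⟩
  have : IsTrans V q := ⟨fun a b c h1 h2 => ⟨h1.1, h2.2.1,
    (hpref i).2.1 _ (hO a h1.1) _ (hO b h1.2.1) _ (hO c h2.2.1) h1.2.2 h2.2.2⟩⟩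
  have : Std.Irrefl q := ⟨fun a h => (hpref i).1 _ (hO a h.1) h.2.2⟩
  obtain ⟨t, ht, hmin⟩ := (Finite.wellFounded_of_trans_of_irrefl q).has_min A hA
  exact ⟨t, ht, fun u hu h => hmin u hu ⟨hT u hu, hT t ht, h⟩⟩

/-- Backward induction along a relation `r` that is well-founded on a closed set `C`: terminal
values `val` and moves `τ` attaining them, optimal for the owner of each position. -/
lemma exists_backward_induction [Finite V] (Γ : DGGame V ι) (hpref : Γ.PrefOrder)
    (r : V → V → Prop) (C : Set V) (hC : ∀ v ∈ C, ∀ y, r v y → y ∈ C)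
    (hwf : WellFounded (fun y x => r x y ∧ x ∈ C))
    (hsucc : ∀ v ∈ C, ¬ Γ.Terminal v → ∃ y, r v y) :
    ∃ val τ : V → V, (∀ v, Γ.Terminal v → val v = v) ∧ (∀ v ∈ C, Γ.Terminal (val v)) ∧
      ∀ v ∈ C, ¬ Γ.Terminal v → r v (τ v) ∧ val (τ v) = val v ∧
        ∀ y, r v y → ¬ Γ.pref (Γ.owner v) (some (val y)) (some (val v)) := by
  -- `best i A` is an unbeaten element of `A` for player `i` (junk if there is none).
  have hbest : ∀ (i : ι) (A : Set V), ∃ t : V, A.Nonempty → (∀ t ∈ A, Γ.Terminal t) →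
      t ∈ A ∧ ∀ u ∈ A, ¬ Γ.pref i (some u) (some t) := by
    intro i A
    by_cases h : A.Nonempty ∧ ∀ t ∈ A, Γ.Terminal t
    · obtain ⟨t, h1, h2⟩ := exists_best Γ hpref i A h.1 h.2
      exact ⟨t, fun _ _ => ⟨h1, h2⟩⟩
    · exact ⟨Γ.init, fun h1 h2 => absurd ⟨h1, h2⟩ h⟩
  choose best hbest using hbest
  let val : V → V := hwf.fix fun v ih =>
    if Γ.Terminal v then v else best (Γ.owner v) {t | ∃ y, ∃ h : r v y ∧ v ∈ C, t = ih y h}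
  have hval : ∀ v, val v = if Γ.Terminal v then v else
      best (Γ.owner v) {t | ∃ y, ∃ _ : r v y ∧ v ∈ C, t = val y} := fun v => hwf.fix_eq _ v
  have hvT : ∀ v, Γ.Terminal v → val v = v := fun v hv => by rw [hval, if_pos hv]
  have key : ∀ v, v ∈ C → Γ.Terminal (val v) ∧ (¬ Γ.Terminal v →
      (∃ y, r v y ∧ val y = val v) ∧
        ∀ y, r v y → ¬ Γ.pref (Γ.owner v) (some (val y)) (some (val v))) := by
    intro v
    induction v using hwf.induction with
    | _ v ih =>
      intro hv
      by_cases hT : Γ.Terminal v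
      · exact ⟨by rwa [hvT v hT], fun h => absurd hT h⟩
      · obtain ⟨y0, hy0⟩ := hsucc v hv hT
        have hA := hbest (Γ.owner v) {t | ∃ y, ∃ _ : r v y ∧ v ∈ C, t = val y}
          ⟨val y0, y0, ⟨hy0, hv⟩, rfl⟩ (by
            rintro t ⟨y, h, rfl⟩
            exact (ih y h (hC v hv y h.1)).1)
        have hv' := hval v
        rw [if_neg hT] at hv'
        rw [← hv'] at hA
        obtain ⟨⟨y, h, hy⟩, hopt⟩ := hA
        refine ⟨?_, fun _ => ⟨⟨y, h.1, hy.symm⟩, fun y hy => hopt _ ⟨y, ⟨hy, hv⟩, rfl⟩⟩⟩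
        rw [hy]
        exact (ih y h (hC v hv y h.1)).1
  have hτ : ∀ v, ∃ y, v ∈ C → ¬ Γ.Terminal v → r v y ∧ val y = val v := by
    intro v
    by_cases h : v ∈ C ∧ ¬ Γ.Terminal v
    · obtain ⟨y, hy⟩ := ((key v h.1).2 h.2).1
      exact ⟨y, fun _ _ => hy⟩
    · exact ⟨v, fun h1 h2 => absurd ⟨h1, h2⟩ h⟩
  choose τ hτ using hτ
  exact ⟨val, τ, hvT, fun v hv => (key v hv).1, fun v hv hT =>
    ⟨(hτ v hv hT).1, (hτ v hv hT).2, ((key v hv).2 hT).2⟩⟩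

end DGGame

open DGGame in
/-- In a normalized play-once DG game, if the induced subgraph `G[W]` is acyclic, then
the game has a terminal Nash equilibrium. -/
theorem stmt14 {V ι : Type*} [Finite V] (Γ : DGGame V ι)
    (hinit : ¬ Γ.Terminal Γ.init) (hpref : Γ.PrefOrder)
    (hpo : Γ.PlayOnce) (hnorm : Γ.Normalized)
    (hacyc : ¬ ∃ x, Relation.TransGen Γ.adjW x x) :
    ∃ σ : V → V, Γ.IsTerminalNE σ := by
  obtain ⟨r, -, hmax⟩ :=
    (Set.toFinite {r | Γ.Admissible r}).exists_le_maximal (admissible_baseRel Γ hacyc)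
  have hr : Γ.Admissible r := hmax.1
  let C : Set V := {v | Relation.ReflTransGen r Γ.init v}
  have hC : ∀ v ∈ C, ∀ y, r v y → y ∈ C := fun v hv y h => Relation.ReflTransGen.tail hv h
  have hwf : WellFounded (fun y x => r x y ∧ x ∈ C) := hr.wellFounded
  have hsucc : ∀ v ∈ C, ¬ Γ.Terminal v → ∃ y, r v y := by
    intro v _ hT
    by_cases hS : v ∈ Γ.Sset
    · obtain ⟨_, t, h1, h2, _⟩ := hS
      exact ⟨t, hr.base_le _ _ ⟨h1, Or.inr h2⟩⟩
    · simp only [Terminal, not_forall, not_not] at hT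
      obtain ⟨y, hy⟩ := hT
      exact ⟨y, hr.base_le _ _ ⟨hy, Or.inl hS⟩⟩
  obtain ⟨val, τ, hvT, hvalT, hτ⟩ := exists_backward_induction Γ hpref r C hC hwf hsucc
  -- `P` is the set of positions on the `τ`-play (its final terminal included), `c` its outcome.
  let P : Set V := {v | Relation.ReflTransGen (fun a b => ¬ Γ.Terminal a ∧ b = τ a) Γ.init v}
  let c : V := val Γ.init
  have hPinit : Γ.init ∈ P := Relation.ReflTransGen.refl
  have hPτ : ∀ v ∈ P, ¬ Γ.Terminal v → τ v ∈ P := fun v hv hT =>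
    Relation.ReflTransGen.tail hv ⟨hT, rfl⟩
  have hPC : ∀ v ∈ P, v ∈ C ∧ val v = c := by
    intro v hv
    induction hv with
    | refl => exact ⟨Relation.ReflTransGen.refl, rfl⟩
    | tail _ h ih =>
      obtain ⟨hT, rfl⟩ := h
      have := hτ _ ih.1 hT
      exact ⟨hC _ ih.1 _ this.1, this.2.1.trans ih.2⟩
  let RP : V → Prop := fun v => ∃ p ∈ P, Relation.ReflTransGen r v p
  have hRPT : ∀ v, RP v → Γ.Terminal v → v = c := by
    rintro v ⟨p, hp, hvp⟩ hT
    rcases Relation.ReflTransGen.cases_head hvp with rfl | ⟨y, hvy, _⟩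
    · rw [← (hPC v hp).2, hvT v hT]
    · exact absurd (hr.le_adj _ _ hvy) (hT y)
  have hσ : ∀ v, ∃ y, ¬ Γ.Terminal v → Γ.adj v y ∧ (v ∈ P → y = τ v) ∧ (RP v → RP y) ∧
      (v ∈ C → r v y) ∧ (¬ RP v → ReachesCycle r v → ReachesCycle r y) ∧
      (¬ RP v → v ∈ C → y = τ v) := by
    intro v
    by_cases hT : Γ.Terminal v
    · exact ⟨v, fun h => absurd hT h⟩
    by_cases hP : v ∈ P
    · have h := hτ v (hPC v hP).1 hT
      have hRP : RP v := ⟨v, hP, .refl⟩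
      exact ⟨τ v, fun _ => ⟨hr.le_adj _ _ h.1, fun _ => rfl, fun _ => ⟨_, hPτ v hP hT, .refl⟩,
        fun _ => h.1, fun h => absurd hRP h, fun _ _ => rfl⟩⟩
    by_cases hRP : RP v
    · obtain ⟨p, hp, hvp⟩ := hRP
      rcases Relation.ReflTransGen.cases_head hvp with rfl | ⟨y, hvy, hyp⟩
      · exact absurd hp hP
      · exact ⟨y, fun _ => ⟨hr.le_adj _ _ hvy, fun h => absurd h hP, fun _ => ⟨p, hp, hyp⟩,
          fun _ => hvy, fun h => absurd ⟨p, hp, hvp⟩ h, fun h => absurd ⟨p, hp, hvp⟩ h⟩⟩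
    by_cases hI : ReachesCycle r v
    · obtain ⟨y, hvy, hy⟩ := hI.exists_succ
      refine ⟨y, fun _ => ⟨hr.le_adj _ _ hvy, fun h => absurd h hP, fun h => absurd h hRP,
        fun _ => hvy, fun _ _ => hy, fun _ hv => ?_⟩⟩
      obtain ⟨x, hvx, hxx⟩ := hI
      exact absurd hxx (hr.acyclic x (Relation.ReflTransGen.trans hv hvx))
    by_cases hvC : v ∈ C
    · have h := hτ v hvC hT
      exact ⟨τ v, fun _ => ⟨hr.le_adj _ _ h.1, fun h => absurd h hP, fun h => absurd h hRP,
        fun _ => h.1, fun _ h => absurd h hI, fun _ _ => rfl⟩⟩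
    · have hT' := hT
      simp only [Terminal, not_forall, not_not] at hT'
      obtain ⟨y, hy⟩ := hT'
      exact ⟨y, fun _ => ⟨hy, fun h => absurd h hP, fun h => absurd h hRP,
        fun h => absurd h hvC, fun _ h => absurd h hI, fun _ h => absurd h hvC⟩⟩
  choose σ hσ using hσ
  -- Any situation agreeing with `σ` along `P` has outcome `c`.
  have houtP : ∀ σ' : V → V, (∀ v ∈ P, ¬ Γ.Terminal v → σ' v = σ v) →
      Γ.outcome σ' = some c := by
    intro σ' h
    have h' : ∀ v ∈ P, ¬ Γ.Terminal v → σ' v = τ v := fun v hv hT =>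
      (h v hv hT).trans ((hσ v hT).2.1 hv)
    obtain ⟨t, ht, hT, ho⟩ := exists_outcome Γ σ' P hPinit
      (fun v hv hT => h' v hv hT ▸ hPτ v hv hT) _ hwf
      (fun v hv hT => ⟨h' v hv hT ▸ (hτ v (hPC v hv).1 hT).1, (hPC v hv).1⟩)
    rw [ho, hRPT t ⟨t, ht, .refl⟩ hT]
  have hout : Γ.outcome σ = some c := houtP σ fun _ _ _ => rfl
  refine ⟨σ, ⟨fun v hT => (hσ v hT).1, ?_⟩, c, hout⟩
  intro i σ' hsit hdev
  rw [hout]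
  have hcO : some c ∈ Γ.OutcomeSet := Or.inr ⟨c, hvalT _ (hPC _ hPinit).1, rfl⟩
  have hnO : none ∈ Γ.OutcomeSet := Or.inl rfl
  have hcc : ¬ Γ.pref i (some c) (some c) := (hpref i).1 _ hcO
  -- `p` is the only position of the deviating player.
  obtain ⟨p, hp⟩ := Set.ncard_eq_one.1 (hpo i)
  have hpmem : ¬ Γ.Terminal p ∧ Γ.owner p = i := by
    have : p ∈ {x | ¬ Γ.Terminal x ∧ Γ.owner x = i} := by rw [hp]; rfl
    exact this
  have hagree : ∀ v, ¬ Γ.Terminal v → v ≠ p → σ' v = σ v := by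
    intro v hT hvp
    refine hdev v fun ho => hvp ?_
    have : v ∈ {x | ¬ Γ.Terminal x ∧ Γ.owner x = i} := ⟨hT, ho⟩
    rw [hp] at this
    exact this
  obtain ⟨hpT, rfl⟩ := hpmem
  by_cases hpP : p ∈ P
  swap
  · rw [houtP σ' fun v hv hT => hagree v hT (by rintro rfl; exact hpP hv)]
    exact hcc
  have hpC := (hPC p hpP).1
  have hpopt := (hτ p hpC hpT).2.2
  rw [(hPC p hpP).2] at hpopt
  have hpRP : RP p := ⟨p, hpP, .refl⟩
  by_cases hry : r p (σ' p)
  · obtain ⟨t, ht, hT, ho⟩ := exists_outcome Γ σ'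
      {v | v ∈ C ∧ (RP v ∨ (¬ RP v ∧ val v = val (σ' p)))}
      ⟨Relation.ReflTransGen.refl, Or.inl ⟨_, hPinit, .refl⟩⟩ (by
        rintro v ⟨hvC, hv⟩ hT
        by_cases hvp : v = p
        · subst hvp
          refine ⟨hC _ hvC _ hry, ?_⟩
          by_cases h : RP (σ' v)
          · exact Or.inl h
          · exact Or.inr ⟨h, rfl⟩
        · rw [hagree v hT hvp]
          obtain ⟨-, -, h3, h4, -, h6⟩ := hσ v hT
          refine ⟨hC _ hvC _ (h4 hvC), ?_⟩
          rcases hv with hv | ⟨hv, hval⟩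
          · exact Or.inl (h3 hv)
          · by_cases h : RP (σ v)
            · exact Or.inl h
            · refine Or.inr ⟨h, ?_⟩
              rw [h6 hv hvC, (hτ v hvC hT).2.1, hval]) _ hwf (by
        rintro v ⟨hvC, -⟩ hT
        refine ⟨?_, hvC⟩
        by_cases hvp : v = p
        · subst hvp; exact hry
        · rw [hagree v hT hvp]
          exact (hσ v hT).2.2.2.1 hvC)
    rw [ho]
    rcases ht.2 with h | ⟨_, h⟩
    · rw [hRPT t h hT]
      exact hcc
    · rw [hvT t hT] at h
      rw [h]
      exact hpopt _ hry
  · have hyadj : Γ.adj p (σ' p) := hsit p hpT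
    have hpS : p ∈ Γ.Sset := by
      by_contra h
      exact hry (hr.base_le _ _ ⟨hyadj, Or.inl h⟩)
    have hyD : RP (σ' p) ∨ ReachesCycle r (σ' p) :=
      (Admissible.discarded_move hmax hyadj hry).imp (fun h => ⟨p, hpP, h⟩) id
    rcases outcome_cases Γ σ' {v | RP v ∨ ReachesCycle r v} (Or.inl ⟨_, hPinit, .refl⟩) (by
        intro v hv hT
        by_cases hvp : v = p
        · subst hvp; exact hyD
        · rw [hagree v hT hvp]
          obtain ⟨-, -, h3, -, h5, -⟩ := hσ v hT
          by_cases h : RP v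
          · exact Or.inl (h3 h)
          · exact Or.inr (h5 h (hv.resolve_left h))) with ho | ⟨t, ht, hT, ho⟩
    · -- The move to `a(p)` is retained, so `c` is at least as good for `p` as `a(p)`,
      -- which is better than `∞`.
      rw [ho]
      intro hbad
      obtain ⟨_, t, h1, h2, h3⟩ := hpS
      have htO : some t ∈ Γ.OutcomeSet := Or.inr ⟨t, h2, rfl⟩
      have := hpopt t (hr.base_le _ _ ⟨h1, Or.inr h2⟩)
      rw [hvT t h2] at this
      exact this ((hpref _).2.1 _ htO _ hnO _ hcO h3 hbad)
    · rw [ho]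
      rcases ht with h | h
      · rw [hRPT t h hT]
        exact hcc
      · obtain ⟨y, hy, _⟩ := h.exists_succ
        exact absurd (hr.le_adj _ _ hy) (hT y)
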